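/- Suppose 0 ≤ k ≤ p − 2, e_k < h_k, and h_{k+1} = h_k (equivalently, c(k + 1 + h_k) = h_k). Then e_{k+1} ≥ h_{k+1} if and only if N_k ≥ 2·h_k² − h_k + c(k+1) (equivalently, e_k² ≥ h_k² − h_k + c(k+1)). (Proposition 4.10(i).) -/

import Mathlib

/-- The shifted h-index of order `k`: the largest `m` with `1 ≤ m ≤ p - k` and
`c (k + m) ≥ m` (the Hirsch h-index of the tail sequence `c (k+1), …, c p`).
Taken as the `sup` of the (finite) set of such `m`, which equals its maximum
when the set is nonempty and is `0` otherwise. -/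
def hIdx (p : ℕ) (c : ℕ → ℕ) (k : ℕ) : ℕ :=
  ((Finset.Icc 1 (p - k)).filter (fun m => m ≤ c (k + m))).sup id

/-- The shifted core sum `N_k = Σ_{j=k+1}^{k+h_k} c j`. -/
def coreSum (p : ℕ) (c : ℕ → ℕ) (k : ℕ) : ℕ :=
  ∑ j ∈ Finset.Icc (k + 1) (k + hIdx p c k), c j

/-- The shifted e-index `e_k = √(N_k − h_k²)`. -/
noncomputable def eIdx (p : ℕ) (c : ℕ → ℕ) (k : ℕ) : ℝ :=
  Real.sqrt ((coreSum p c k : ℝ) - (hIdx p c k : ℝ) ^ 2)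

/-!
If `h_{k+1} = h_k = h`, then `c (k + 1 + h) = h`: this entry is the last of the core of order
`k + 1`, so it is at least `h`, and were it larger, `h + 1` would be admissible at order `k`.
Passing from order `k` to `k + 1` slides the core window by one step, losing `c (k + 1)` and
gaining `h`, so `N_{k+1} = N_k - c (k + 1) + h`. Finally `h_{k+1} ≤ e_{k+1}` says
`2 * h ^ 2 ≤ N_{k+1}`.
-/

theorem sum_Icc_add_eq_add_sum_Icc {M : Type*} [AddCommMonoid M] (f : ℕ → M) (a n : ℕ) :
    ∑ j ∈ Finset.Icc (a + 1) (a + n), f j + f (a + 1 + n) =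
      f (a + 1) + ∑ j ∈ Finset.Icc (a + 1 + 1) (a + 1 + n), f j := by
  have hle : a + 1 ≤ a + n + 1 := by omega
  rw [Nat.add_right_comm a 1 n, ← Finset.sum_Icc_succ_top hle f,
    ← Finset.add_sum_Ioc_eq_sum_Icc hle, Finset.Icc_add_one_left_eq_Ioc]

section

variable {p k m : ℕ} {c : ℕ → ℕ}

theorem le_hIdx (hm : m ≤ p - k) (hc : m ≤ c (k + m)) : m ≤ hIdx p c k := by
  obtain rfl | hpos := Nat.eq_zero_or_pos m
  · exact Nat.zero_le _
  · exact Finset.le_sup (f := id) (Finset.mem_filter.2 ⟨Finset.mem_Icc.2 ⟨hpos, hm⟩, hc⟩)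

theorem hIdx_le_sub_and_le_apply_add_hIdx (p : ℕ) (c : ℕ → ℕ) (k : ℕ) :
    hIdx p c k ≤ p - k ∧ hIdx p c k ≤ c (k + hIdx p c k) := by
  refine Finset.sup_induction (p := fun m => m ≤ p - k ∧ m ≤ c (k + m)) ?_ ?_ ?_
  · exact ⟨Nat.zero_le _, Nat.zero_le _⟩
  · intro a ha b hb
    obtain h | h := max_choice a b
    · rwa [← h] at ha
    · rwa [← h] at hb
  · intro m hm
    obtain ⟨hmem, hc⟩ := Finset.mem_filter.1 hm
    exact ⟨(Finset.mem_Icc.1 hmem).2, hc⟩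

theorem hIdx_le_sub (p : ℕ) (c : ℕ → ℕ) (k : ℕ) : hIdx p c k ≤ p - k :=
  (hIdx_le_sub_and_le_apply_add_hIdx p c k).1

theorem hIdx_le_apply_add_hIdx (p : ℕ) (c : ℕ → ℕ) (k : ℕ) : hIdx p c k ≤ c (k + hIdx p c k) :=
  (hIdx_le_sub_and_le_apply_add_hIdx p c k).2

theorem apply_add_hIdx_le_hIdx (h : hIdx p c k < p - k) : c (k + 1 + hIdx p c k) ≤ hIdx p c k := by
  by_contra! hlt
  rw [Nat.add_right_comm] at hlt
  exact (Nat.lt_succ_self _).not_ge (le_hIdx h hlt)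

theorem apply_add_hIdx_eq_hIdx_of_hIdx_succ_eq (hk : k < p) (hh : hIdx p c (k + 1) = hIdx p c k) :
    c (k + 1 + hIdx p c k) = hIdx p c k := by
  have hsub := hIdx_le_sub p c (k + 1)
  have hle := hIdx_le_apply_add_hIdx p c (k + 1)
  rw [hh] at hsub hle
  exact (apply_add_hIdx_le_hIdx (by omega)).antisymm hle

theorem coreSum_add_hIdx_eq_of_hIdx_succ_eq (hk : k < p)
    (hh : hIdx p c (k + 1) = hIdx p c k) :
    coreSum p c k + hIdx p c k = c (k + 1) + coreSum p c (k + 1) := by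
  have hslide := sum_Icc_add_eq_add_sum_Icc c k (hIdx p c k)
  rw [apply_add_hIdx_eq_hIdx_of_hIdx_succ_eq hk hh] at hslide
  rwa [coreSum, coreSum, hh]

theorem hIdx_le_eIdx_iff (p : ℕ) (c : ℕ → ℕ) (k : ℕ) :
    (hIdx p c k : ℝ) ≤ eIdx p c k ↔ 2 * hIdx p c k ^ 2 ≤ coreSum p c k := by
  obtain hzero | hpos := Nat.eq_zero_or_pos (hIdx p c k)
  · simp [hzero, eIdx]
  · rw [eIdx, Real.le_sqrt' (by exact_mod_cast hpos), le_sub_iff_add_le, ← two_mul]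
    exact_mod_cast Iff.rfl

end

theorem stmt_12_general (p : ℕ) (c : ℕ → ℕ) (k : ℕ) (hk : k < p)
    (hh : hIdx p c (k + 1) = hIdx p c k) :
    (hIdx p c (k + 1) : ℝ) ≤ eIdx p c (k + 1) ↔
      2 * (hIdx p c k : ℤ) ^ 2 - hIdx p c k + c (k + 1) ≤ (coreSum p c k : ℤ) := by
  have hcore := coreSum_add_hIdx_eq_of_hIdx_succ_eq hk hh
  rw [hIdx_le_eIdx_iff, hh]
  zify at hcore ⊢
  constructor <;> intro h <;> linarith

theorem stmt_12 (p : ℕ) (hp : 1 ≤ p) (c : ℕ → ℕ)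
    (hmono : ∀ i j, 1 ≤ i → i ≤ j → j ≤ p → c j ≤ c i)
    (hpos : ∀ j, 1 ≤ j → j ≤ p → 1 ≤ c j)
    (hzero : ∀ j, p < j → c j = 0)
    (k : ℕ) (hk : k + 2 ≤ p)
    (he : eIdx p c k < (hIdx p c k : ℝ))
    (hh : hIdx p c (k + 1) = hIdx p c k) :
    (hIdx p c (k + 1) : ℝ) ≤ eIdx p c (k + 1) ↔
      2 * (hIdx p c k : ℤ) ^ 2 - hIdx p c k + c (k + 1) ≤ (coreSum p c k : ℤ) :=
  stmt_12_general p c k (by omega) hh
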